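/- Let r ≥ 2 and let H be an (r+1)-graph on n vertices with maximum r-degree at most d. Then the number of triangles in H, that is, sets {e,f,g} of three distinct edges with |e∩f| = |f∩g| = |g∩e| = 1 and e∩f∩g = ∅, is at most d³·n^{3r−3}. -/

import Mathlib

open Finset
open scoped Classical

/-- `Z` is an independent set of the hypergraph `H`: it contains no edge. -/
def IsIndep {V : Type*} [DecidableEq V] (H : Finset (Finset V)) (Z : Finset V) : Prop :=
  ∀ e ∈ H, ¬ e ⊆ Z

/-- The independence number of a hypergraph on a finite vertex type. -/
noncomputable def indepNum {V : Type*} [Fintype V] [DecidableEq V]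
    (H : Finset (Finset V)) : ℕ :=
  ((Finset.univ : Finset V).powerset.filter (fun Z => IsIndep H Z)).sup Finset.card

/-- `H` has maximum `r`-degree at most `d`: every `r`-element vertex set is
contained in at most `d` edges. -/
def maxDegLe {V : Type*} [DecidableEq V] (r : ℕ) (H : Finset (Finset V)) (d : ℕ) : Prop :=
  ∀ S : Finset V, S.card = r → (H.filter (fun e => S ⊆ e)).card ≤ d

/-!
The three edges of a triangle meet pairwise in three distinct vertices, its corners. So a triangle
is given by its corners and an edge through each pair of corners. There are at most `n ^ 3` choices
of corners. An edge through a given pair contains one of the at most `n ^ (r - 2)` sets of size `r`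
extending that pair, each of which lies in at most `d` edges; so each of the three edges can be
chosen in at most `d * n ^ (r - 2)` ways.
-/

section

variable {V : Type*} [DecidableEq V]

/-- The edges of the hypergraph `H` that contain `S`; their number is the degree of `S`. -/
def edgesContaining (H : Finset (Finset V)) (S : Finset V) : Finset (Finset V) :=
  {e ∈ H | S ⊆ e}

/-- The triangles of the hypergraph `H`: sets of three edges that meet pairwise and have no common
vertex. Two edges of a triangle may share more than one vertex here. -/
noncomputable def triangles (H : Finset (Finset V)) : Finset (Finset (Finset V)) :=
  {T ∈ H.powersetCard 3 |
    (T : Set (Finset V)).Pairwise (fun e f ↦ (e ∩ f).Nonempty) ∧ ∀ x, ∃ e ∈ T, x ∉ e}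

/-- The triples of edges of `H` passing through `{a, b}`, `{b, c}` and `{c, a}`, as unordered sets:
the candidates for a triangle with corners `a`, `b`, `c`. -/
def edgeTriplesThrough (H : Finset (Finset V)) (a b c : V) : Finset (Finset (Finset V)) :=
  (edgesContaining H {a, b} ×ˢ edgesContaining H {b, c} ×ˢ edgesContaining H {c, a}).image
    fun t ↦ {t.1, t.2.1, t.2.2}

variable {H : Finset (Finset V)}

theorem mem_edgesContaining_pair {a b : V} {e : Finset V} :
    e ∈ edgesContaining H {a, b} ↔ e ∈ H ∧ a ∈ e ∧ b ∈ e := by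
  simp only [edgesContaining, mem_filter, insert_subset_iff, singleton_subset_iff]

theorem mem_edgeTriplesThrough {a b c : V} {T : Finset (Finset V)} :
    T ∈ edgeTriplesThrough H a b c ↔
      ∃ e ∈ edgesContaining H {a, b}, ∃ f ∈ edgesContaining H {b, c},
        ∃ g ∈ edgesContaining H {c, a}, {e, f, g} = T := by
  simp only [edgeTriplesThrough, mem_image, mem_product, Prod.exists]
  grind

theorem card_edgesContaining_le [Fintype V] {r d : ℕ} (hH : ∀ e ∈ H, r ≤ #e)
    (hdeg : maxDegLe r H d) {S : Finset V} (hS : #S ≤ r) :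
    #(edgesContaining H S) ≤ (Fintype.card V - #S).choose (r - #S) * d := by
  have hcover : edgesContaining H S ⊆
      (powersetCard (r - #S) Sᶜ).biUnion fun U ↦ edgesContaining H (S ∪ U) := by
    intro e he
    obtain ⟨heH, hSe⟩ := mem_filter.mp he
    obtain ⟨R, hSR, hRe, hR⟩ := exists_subsuperset_card_eq hSe hS (hH e heH)
    refine mem_biUnion.mpr ⟨R \ S, mem_powersetCard.mpr ⟨?_, ?_⟩, mem_filter.mpr ⟨heH, ?_⟩⟩
    · exact fun x hx ↦ mem_compl.mpr (mem_sdiff.mp hx).2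
    · rw [card_sdiff_of_subset hSR, hR]
    · rwa [union_sdiff_of_subset hSR]
  have hdegU : ∀ U ∈ powersetCard (r - #S) Sᶜ, #(edgesContaining H (S ∪ U)) ≤ d := by
    intro U hU
    obtain ⟨hUS, hUcard⟩ := mem_powersetCard.mp hU
    refine hdeg (S ∪ U) ?_
    rw [card_union_of_disjoint (subset_compl_iff_disjoint_left.mp hUS), hUcard]
    omega
  calc #(edgesContaining H S)
      ≤ #(powersetCard (r - #S) Sᶜ) * d :=
        (card_le_card hcover).trans (card_biUnion_le_card_mul _ _ _ hdegU)
    _ = (Fintype.card V - #S).choose (r - #S) * d := by rw [card_powersetCard, card_compl]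

theorem card_edgesContaining_le_pow_mul [Fintype V] {r d : ℕ} (hH : ∀ e ∈ H, r ≤ #e)
    (hdeg : maxDegLe r H d) {S : Finset V} (hS : #S ≤ r) :
    #(edgesContaining H S) ≤ Fintype.card V ^ (r - #S) * d := by
  refine (card_edgesContaining_le hH hdeg hS).trans (Nat.mul_le_mul_right d ?_)
  exact (Nat.choose_le_pow _ _).trans (Nat.pow_le_pow_left (Nat.sub_le _ _) _)

theorem card_edgeTriplesThrough_le {D : ℕ}
    (hD : ∀ x y, x ≠ y → #(edgesContaining H {x, y}) ≤ D)
    {a b c : V} (hab : a ≠ b) (hbc : b ≠ c) (hca : c ≠ a) :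
    #(edgeTriplesThrough H a b c) ≤ D ^ 3 :=
  calc #(edgeTriplesThrough H a b c)
      ≤ #(edgesContaining H {a, b}) * (#(edgesContaining H {b, c}) *
          #(edgesContaining H {c, a})) := by
        rw [← card_product, ← card_product]
        exact card_image_le
    _ ≤ D * (D * D) := by gcongr <;> exact hD _ _ ‹_›
    _ = D ^ 3 := by ring

theorem exists_corners_of_mem_triangles {T : Finset (Finset V)} (hT : T ∈ triangles H) :
    ∃ a b c, (a ≠ b ∧ b ≠ c ∧ c ≠ a) ∧ T ∈ edgeTriplesThrough H a b c := by
  obtain ⟨hTH, hmeet, hcommon⟩ := mem_filter.mp hT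
  obtain ⟨hsub, hcard⟩ := mem_powersetCard.mp hTH
  obtain ⟨e, f, g, hef, heg, hfg, rfl⟩ := card_eq_three.mp hcard
  have hno : ∀ x ∈ e, x ∈ f → x ∉ g := by
    intro x hxe hxf hxg
    simpa [hxe, hxf, hxg] using hcommon x
  obtain ⟨a, ha⟩ := hmeet (by simp) (by simp) heg.symm
  obtain ⟨b, hb⟩ := hmeet (by simp) (by simp) hef
  obtain ⟨c, hc⟩ := hmeet (by simp) (by simp) hfg
  rw [mem_inter] at ha hb hc
  refine ⟨a, b, c, ⟨?_, ?_, ?_⟩, mem_edgeTriplesThrough.mpr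
    ⟨e, mem_edgesContaining_pair.mpr ⟨hsub (by simp), ha.2, hb.1⟩,
      f, mem_edgesContaining_pair.mpr ⟨hsub (by simp), hb.2, hc.1⟩,
      g, mem_edgesContaining_pair.mpr ⟨hsub (by simp), hc.2, ha.1⟩, rfl⟩⟩
  · rintro rfl
    exact hno a ha.2 hb.2 ha.1
  · rintro rfl
    exact hno b hb.1 hb.2 hc.2
  · rintro rfl
    exact hno c ha.2 hc.1 hc.2

theorem card_triangles_le [Fintype V] {D : ℕ}
    (hD : ∀ x y, x ≠ y → #(edgesContaining H {x, y}) ≤ D) :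
    #(triangles H) ≤ Fintype.card V ^ 3 * D ^ 3 := by
  let corners : Finset (V × V × V) := {p | p.1 ≠ p.2.1 ∧ p.2.1 ≠ p.2.2 ∧ p.2.2 ≠ p.1}
  have hcover : triangles H ⊆ corners.biUnion fun p ↦ edgeTriplesThrough H p.1 p.2.1 p.2.2 := by
    intro T hT
    obtain ⟨a, b, c, hne, hmem⟩ := exists_corners_of_mem_triangles hT
    exact mem_biUnion.mpr ⟨(a, b, c), (mem_filter_univ _).mpr hne, hmem⟩
  have hfiber : ∀ p ∈ corners, #(edgeTriplesThrough H p.1 p.2.1 p.2.2) ≤ D ^ 3 := by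
    intro p hp
    obtain ⟨hab, hbc, hca⟩ := (mem_filter_univ _).mp hp
    exact card_edgeTriplesThrough_le hD hab hbc hca
  have hcorners : #corners ≤ Fintype.card V ^ 3 :=
    calc #corners ≤ Fintype.card (V × V × V) := card_le_univ corners
      _ = Fintype.card V ^ 3 := by simp only [Fintype.card_prod]; ring
  calc #(triangles H) ≤ #corners * D ^ 3 :=
        (card_le_card hcover).trans (card_biUnion_le_card_mul _ _ _ hfiber)
    _ ≤ Fintype.card V ^ 3 * D ^ 3 := Nat.mul_le_mul_right _ hcorners

theorem mem_triangles_of_card_inter_eq_one {T : Finset (Finset V)} (hT : T ∈ H.powersetCard 3)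
    (hmeet : ∀ e ∈ T, ∀ f ∈ T, e ≠ f → #(e ∩ f) = 1)
    (hempty : ∀ e ∈ T, ∀ f ∈ T, ∀ g ∈ T, e ≠ f → f ≠ g → e ≠ g → e ∩ f ∩ g = ∅) :
    T ∈ triangles H := by
  refine mem_filter.mpr ⟨hT, fun e he f hf hef ↦ ?_, fun x ↦ ?_⟩
  · exact card_pos.mp ((hmeet e he f hf hef).symm ▸ one_pos)
  · obtain ⟨e, f, g, hef, heg, hfg, rfl⟩ := card_eq_three.mp (mem_powersetCard.mp hT).2
    by_contra! hx
    have hxinter : x ∈ e ∩ f ∩ g := by simp [hx]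
    rw [hempty e (by simp) f (by simp) g (by simp) hef hfg heg] at hxinter
    exact notMem_empty x hxinter

theorem stmt15_general [Fintype V] {r d : ℕ} (hr : 2 ≤ r) (hH : ∀ e ∈ H, r ≤ #e)
    (hdeg : maxDegLe r H d) :
    #(triangles H) ≤ d ^ 3 * Fintype.card V ^ (3 * r - 3) := by
  have hpair (x y : V) (hxy : x ≠ y) :
      #(edgesContaining H {x, y}) ≤ Fintype.card V ^ (r - 2) * d := by
    have hcard : #{x, y} = 2 := card_pair hxy
    simpa only [hcard] using card_edgesContaining_le_pow_mul hH hdeg (hcard.trans_le hr)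
  calc #(triangles H)
      ≤ Fintype.card V ^ 3 * (Fintype.card V ^ (r - 2) * d) ^ 3 := card_triangles_le hpair
    _ = d ^ 3 * Fintype.card V ^ (3 + (r - 2) * 3) := by ring
    _ = d ^ 3 * Fintype.card V ^ (3 * r - 3) := by congr 2; omega

end

/-- In an `(r+1)`-graph on `n` vertices with maximum `r`-degree at most `d`,
the number of triangles — sets `{e,f,g}` of three distinct edges with pairwise
intersections of size 1 and empty triple intersection — is at most `d³·n^{3r−3}`. -/
theorem stmt15 (r n d : ℕ) (hr : 2 ≤ r)
    (V : Type) [Fintype V] [DecidableEq V] (hV : Fintype.card V = n)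
    (H : Finset (Finset V)) (hH : ∀ e ∈ H, e.card = r + 1)
    (hdeg : maxDegLe r H d) :
    ((H.powersetCard 3).filter
        (fun T => (∀ e ∈ T, ∀ f ∈ T, e ≠ f → (e ∩ f).card = 1) ∧
          (∀ e ∈ T, ∀ f ∈ T, ∀ g ∈ T, e ≠ f → f ≠ g → e ≠ g → e ∩ f ∩ g = ∅))).card
      ≤ d ^ 3 * n ^ (3 * r - 3) := by
  subst hV
  refine (card_le_card fun T hT ↦ ?_).trans
    (stmt15_general hr (fun e he ↦ r.le_succ.trans (hH e he).ge) hdeg)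
  obtain ⟨hT3, hmeet, hempty⟩ := mem_filter.mp hT
  exact mem_triangles_of_card_inter_eq_one hT3 hmeet hempty
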